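/- Norm of the basis elements (Theorem 5.2 of the paper, realized on the degree-d representation): let p, q, d be natural numbers and let T = a₋^p ∘ a₊^p ∘ b₊^q ∘ b₋^q ∈ E. Then (i) for every 0 ≤ j ≤ d, T(x^(d−j)·y^j) = λ_j · x^(d−j)·y^j, where λ_j = ε^(p+q) · ((d−j+p)!/(d−j)!) · (j!/(j−q)!) if j ≥ q and λ_j = 0 if j < q; and (ii) the average satisfies (1/(d+1)) · Σ_{j=0}^{d} λ_j = (p!·q!/(p+q+1)!) · Π_{s=1}^{q} (ε(d+1) − ε·s) · Π_{s=1}^{p} (ε(d+1) + ε·s). (In the paper's notation this average is ‖ξ(n,r,m)‖² with n = (p+q)/2, r = (p−q)/2 and 2R̂ = ε(d+1).) -/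

import Mathlib

open MvPolynomial

noncomputable section

/-- The polynomial ring ℂ[x,y]. -/
abbrev P2 : Type := MvPolynomial (Fin 2) ℂ

/-- The algebra of ℂ-linear endomorphisms of ℂ[x,y]. -/
abbrev E : Type := Module.End ℂ P2

/-- `a₊` : multiplication by `x`. -/
def aP : E := LinearMap.mulLeft ℂ (X 0 : P2)

/-- `b₊` : multiplication by `y`. -/
def bP : E := LinearMap.mulLeft ℂ (X 1 : P2)

/-- `a₋ = ε ∂/∂x`. -/
def aM (ε : ℝ) : E := (ε : ℂ) • (pderiv (0 : Fin 2)).toLinearMap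

/-- `b₋ = ε ∂/∂y`. -/
def bM (ε : ℝ) : E := (ε : ℂ) • (pderiv (1 : Fin 2)).toLinearMap

def J0 (ε : ℝ) : E := (1/2 : ℂ) • (aP * aM ε - bP * bM ε)
def Jp (ε : ℝ) : E := aP * bM ε
def Jm (ε : ℝ) : E := aM ε * bP
def K0 (ε : ℝ) : E := (1/2 : ℂ) • (aP * aM ε + bP * bM ε + (ε : ℂ) • (1 : E))
def Kp : E := aP * bP
def Km (ε : ℝ) : E := aM ε * bM ε

/-- The eigenvalue `λ_j = ε^(p+q)·((d−j+p)!/(d−j)!)·(j!/(j−q)!)` for `j ≥ q`,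
and `λ_j = 0` for `j < q`. -/
def lam (ε : ℝ) (p q d j : ℕ) : ℂ :=
  if q ≤ j then
    (ε : ℂ) ^ (p + q) * (((d - j + p).factorial : ℂ) / ((d - j).factorial : ℂ)) *
      ((j.factorial : ℂ) / ((j - q).factorial : ℂ))
  else 0

/-!
The derivation `∂/∂x` kills powers of `y`, so `a₋^p a₊^p` multiplies `x^m y^n` by `ε^p` times a
falling factorial of `m + p`, and `b₊^q b₋^q` multiplies it by `ε^q` times one of `n`. Hence
`λ_j = ε^(p+q) p! q! C(d-j+p, p) C(j, q)`. By the Chu–Vandermonde identity in the upper indices the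
sum of the `λ_j` is `ε^(p+q) p! q! C(d+p+1, p+q+1)`. The falling factorial
`(d+p+1) ⋯ (d+1) ⋯ (d-q+1)` hidden in this binomial coefficient is `d + 1` times the two products,
up to `ε^(p+q)`.
-/

section Derivation

variable {R A : Type*} [CommSemiring R] [CommSemiring A] [Algebra R A]
  (D : Derivation R A A) {x f : A}

theorem derivation_apply_pow_mul (hx : D x = 1) (hf : D f = 0) (m : ℕ) :
    D (x ^ m * f) = m • (x ^ (m - 1) * f) := by
  rw [D.leibniz, D.leibniz_pow, hx, hf]
  simp only [smul_eq_mul, mul_one, mul_zero, zero_add, mul_comm f, smul_mul_assoc]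

theorem smul_derivation_pow_apply (hx : D x = 1) (hf : D f = 0) (c : R) (k m : ℕ) :
    ((c • D.toLinearMap) ^ k) (x ^ m * f) =
      (c ^ k * m.descFactorial k) • (x ^ (m - k) * f) := by
  induction k with
  | zero => simp
  | succ k ih =>
    rw [pow_succ', Module.End.mul_apply, ih, map_smul, LinearMap.smul_apply, D.coeFn_coe,
      derivation_apply_pow_mul D hx hf, ← Nat.cast_smul_eq_nsmul R, smul_smul, smul_smul,
      Nat.sub_sub, Nat.descFactorial_succ]
    congr 1
    push_cast
    ring

theorem smul_derivation_pow_mul_mulLeft_pow_apply (hx : D x = 1) (hf : D f = 0) (c : R)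
    (k m : ℕ) :
    ((c • D.toLinearMap) ^ k * LinearMap.mulLeft R x ^ k) (x ^ m * f) =
      (c ^ k * (m + k).descFactorial k) • (x ^ m * f) := by
  rw [Module.End.mul_apply, LinearMap.pow_mulLeft, LinearMap.mulLeft_apply, ← mul_assoc,
    ← pow_add, add_comm k m, smul_derivation_pow_apply D hx hf, Nat.add_sub_cancel]

theorem mulLeft_pow_mul_smul_derivation_pow_apply (hx : D x = 1) (hf : D f = 0) (c : R)
    (k m : ℕ) :
    (LinearMap.mulLeft R x ^ k * (c • D.toLinearMap) ^ k) (x ^ m * f) =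
      (c ^ k * m.descFactorial k) • (x ^ m * f) := by
  rw [Module.End.mul_apply, smul_derivation_pow_apply D hx hf, map_smul, LinearMap.pow_mulLeft,
    LinearMap.mulLeft_apply, ← mul_assoc, ← pow_add]
  obtain hkm | hmk := le_or_gt k m
  · rw [Nat.add_sub_cancel' hkm]
  · simp only [Nat.descFactorial_of_lt hmk, Nat.cast_zero, mul_zero, zero_smul]

end Derivation

section BinomialSums

open Finset

theorem sum_antidiagonal_choose_mul_choose (n a b : ℕ) :
    ∑ ij ∈ antidiagonal n, ij.1.choose a * ij.2.choose b = (n + 1).choose (a + b + 1) := by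
  induction n generalizing b with
  | zero => cases a <;> cases b <;> simp [Nat.choose_eq_zero_of_lt]
  | succ n ih =>
    rw [Nat.sum_antidiagonal_succ']
    cases b with
    | zero => simpa [Nat.choose_succ_succ (n + 1) a] using ih 0
    | succ b =>
      simp only [Nat.choose_zero_succ, mul_zero, zero_add, Nat.choose_succ_succ _ b, mul_add,
        sum_add_distrib]
      rw [ih, ih, ← add_assoc a b 1, ← Nat.choose_succ_succ]

theorem sum_range_choose_mul_choose (p q d : ℕ) :
    ∑ j ∈ range (d + 1), (d - j + p).choose p * j.choose q = (d + p + 1).choose (p + q + 1) := by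
  have vanish (j : ℕ) (hj : j ∈ range (d + p + 1)) (hjd : j ∉ range (d + 1)) :
      j.choose q * (d + p - j).choose p = 0 := by
    rw [mem_range] at hj hjd
    rw [Nat.choose_eq_zero_of_lt (by omega : d + p - j < p), mul_zero]
  rw [add_comm p q, ← sum_antidiagonal_choose_mul_choose,
    Nat.sum_antidiagonal_eq_sum_range_succ fun i j ↦ i.choose q * j.choose p,
    ← sum_subset (range_mono (by omega)) vanish]
  refine sum_congr rfl fun j hj ↦ ?_
  rw [mul_comm, Nat.sub_add_comm (mem_range_succ_iff.mp hj)]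

theorem sum_range_descFactorial_mul_descFactorial (p q d : ℕ) :
    ∑ j ∈ range (d + 1), (d - j + p).descFactorial p * j.descFactorial q =
      p.factorial * q.factorial * (d + p + 1).choose (p + q + 1) := by
  rw [← sum_range_choose_mul_choose, mul_sum]
  refine sum_congr rfl fun j _ ↦ ?_
  rw [Nat.descFactorial_eq_factorial_mul_choose, Nat.descFactorial_eq_factorial_mul_choose,
    mul_mul_mul_comm]

end BinomialSums

section FallingFactorials

theorem prod_Icc_sub_eq_pow_mul_descFactorial {R : Type*} [CommRing R] (c : R) (d q : ℕ) :
    ∏ s ∈ Finset.Icc 1 q, (c * ((d : R) + 1) - c * s) = c ^ q * d.descFactorial q := by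
  induction q with
  | zero => simp
  | succ q ih =>
    rw [Finset.prod_Icc_succ_top (Nat.le_add_left 1 q), ih, Nat.descFactorial_succ]
    obtain hqd | hdq := le_or_gt q d
    · push_cast [Nat.cast_sub hqd]
      ring
    · simp [Nat.descFactorial_of_lt hdq]

theorem prod_Icc_add_eq_pow_mul_descFactorial {R : Type*} [CommSemiring R] (c : R) (d p : ℕ) :
    ∏ s ∈ Finset.Icc 1 p, (c * ((d : R) + 1) + c * s) =
      c ^ p * (d + 1 + p).descFactorial p := by
  induction p with
  | zero => simp
  | succ p ih =>
    rw [Finset.prod_Icc_succ_top (Nat.le_add_left 1 p), ih, ← add_assoc,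
      Nat.succ_descFactorial_succ]
    push_cast
    ring

theorem succ_mul_descFactorial_mul_descFactorial (p q d : ℕ) :
    (d + 1) * d.descFactorial q * (d + 1 + p).descFactorial p =
      (p + q + 1).factorial * (d + p + 1).choose (p + q + 1) := by
  calc (d + 1) * d.descFactorial q * (d + 1 + p).descFactorial p
      = (d + 1 + p - p).descFactorial (p + q + 1 - p) * (d + 1 + p).descFactorial p := by
        rw [← Nat.succ_descFactorial_succ, Nat.add_sub_cancel, add_assoc p,
          Nat.add_sub_cancel_left]
    _ = (d + 1 + p).descFactorial (p + q + 1) :=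
        Nat.descFactorial_mul_descFactorial (by omega)
    _ = (p + q + 1).factorial * (d + p + 1).choose (p + q + 1) := by
        rw [Nat.descFactorial_eq_factorial_mul_choose, add_right_comm d]

end FallingFactorials

theorem lam_eq_descFactorial (ε : ℝ) (p q d j : ℕ) :
    lam ε p q d j = (ε : ℂ) ^ (p + q) * ((d - j + p).descFactorial p * j.descFactorial q) := by
  have factorial_ne_zero (n : ℕ) : (n.factorial : ℂ) ≠ 0 := mod_cast n.factorial_ne_zero
  unfold lam
  split_ifs with hqj
  · rw [← Nat.factorial_mul_descFactorial hqj,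
      ← Nat.factorial_mul_descFactorial (Nat.le_add_left p (d - j)), Nat.add_sub_cancel,
      Nat.cast_mul, Nat.cast_mul, mul_div_cancel_left₀ _ (factorial_ne_zero _),
      mul_div_cancel_left₀ _ (factorial_ne_zero _), mul_assoc]
  · simp [Nat.descFactorial_of_lt (not_le.mp hqj)]

theorem sum_lam (ε : ℝ) (p q d : ℕ) :
    ∑ j ∈ Finset.range (d + 1), lam ε p q d j =
      (ε : ℂ) ^ (p + q) * (p.factorial * q.factorial * (d + p + 1).choose (p + q + 1)) := by
  simp only [lam_eq_descFactorial, ← Finset.mul_sum]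
  exact_mod_cast congrArg (fun n : ℕ ↦ (ε : ℂ) ^ (p + q) * n)
    (sum_range_descFactorial_mul_descFactorial p q d)

theorem aM_pow_mul_aP_pow_apply (ε : ℝ) (p m n : ℕ) :
    (aM ε ^ p * aP ^ p) ((X 0 : P2) ^ m * X 1 ^ n) =
      ((ε : ℂ) ^ p * (m + p).descFactorial p) • ((X 0 : P2) ^ m * X 1 ^ n) :=
  smul_derivation_pow_mul_mulLeft_pow_apply _ (pderiv_X_self 0)
    (by simp [Derivation.leibniz_pow, pderiv_X]) _ p m

theorem bP_pow_mul_bM_pow_apply (ε : ℝ) (q m n : ℕ) :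
    (bP ^ q * bM ε ^ q) ((X 0 : P2) ^ m * X 1 ^ n) =
      ((ε : ℂ) ^ q * n.descFactorial q) • ((X 0 : P2) ^ m * X 1 ^ n) := by
  rw [mul_comm (X 0 ^ m)]
  exact mulLeft_pow_mul_smul_derivation_pow_apply _ (pderiv_X_self 1)
    (by simp [Derivation.leibniz_pow, pderiv_X]) _ q n

/-- Norm of the basis elements (Theorem 5.2, realized on the degree-`d`
representation): `T = a₋^p a₊^p b₊^q b₋^q` acts diagonally on the monomials
`x^(d−j) y^j` with eigenvalues `λ_j`, and the average of the eigenvalues equals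
`(p! q!/(p+q+1)!) Π_{s=1}^{q}(ε(d+1) − εs) Π_{s=1}^{p}(ε(d+1) + εs)`. -/
theorem norm_of_basis_elements (ε : ℝ) (p q d : ℕ) :
    (∀ j ≤ d,
      (aM ε ^ p * aP ^ p * bP ^ q * bM ε ^ q) ((X 0 : P2) ^ (d - j) * (X 1) ^ j)
        = lam ε p q d j • ((X 0 : P2) ^ (d - j) * (X 1) ^ j)) ∧
    (1 / ((d : ℂ) + 1)) * ∑ j ∈ Finset.range (d + 1), lam ε p q d j
      = ((p.factorial : ℂ) * (q.factorial : ℂ) / ((p + q + 1).factorial : ℂ)) *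
          (∏ s ∈ Finset.Icc 1 q, ((ε : ℂ) * ((d : ℂ) + 1) - (ε : ℂ) * (s : ℂ))) *
          (∏ s ∈ Finset.Icc 1 p, ((ε : ℂ) * ((d : ℂ) + 1) + (ε : ℂ) * (s : ℂ))) := by
  constructor
  · intro j _
    rw [mul_assoc, Module.End.mul_apply, bP_pow_mul_bM_pow_apply, map_smul,
      aM_pow_mul_aP_pow_apply, smul_smul, lam_eq_descFactorial]
    congr 1
    ring
  · have falling : ((d : ℂ) + 1) * d.descFactorial q * (d + 1 + p).descFactorial p =
        (p + q + 1).factorial * (d + p + 1).choose (p + q + 1) :=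
      mod_cast succ_mul_descFactorial_mul_descFactorial p q d
    have succ_ne_zero : (d : ℂ) + 1 ≠ 0 := Nat.cast_add_one_ne_zero d
    have factorial_ne_zero : ((p + q + 1).factorial : ℂ) ≠ 0 :=
      mod_cast (p + q + 1).factorial_ne_zero
    rw [sum_lam, prod_Icc_sub_eq_pow_mul_descFactorial, prod_Icc_add_eq_pow_mul_descFactorial]
    field_simp
    linear_combination (-(ε : ℂ) ^ (p + q) * p.factorial * q.factorial) * falling
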